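/- Let F be a dill map with diameter s and local rule f, and M, M' ∈ ℕ be such that for every finite word u and every position j < |u|: d_L(f^*(D_j(u)), f^*(u)) ≤ M + (|f^*(u)| − |f^*(D_j(u))|)/2 and d_L(f^*(D_j(u)), f^*(u)) ≤ M' − (|f^*(u)| − |f^*(D_j(u))|)/2. Let L > 0 and x ∈ A^ℕ be such that |f(x_[i,i+s))| ≥ L for every i ∈ ℕ. Then for every y ∈ A^ℕ, 𝔡_L(F(x), F(y)) ≤ ((M + M')/L)·𝔡_L(x,y). -/

import Mathlib

open Filter

/-- The finite factor `x_[i, i+n)` of the infinite word `x`. -/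
def factor {A : Type*} (x : ℕ → A) (i n : ℕ) : List A := List.ofFn (fun k : Fin n => x (i + k))

/-- The shift map `σ` on infinite words. -/
def shift {A : Type*} (x : ℕ → A) : ℕ → A := fun i => x (i + 1)
/-- The maximal length of a common (not necessarily contiguous) subsequence of `u` and `v`. -/
noncomputable def lcs {A : Type*} (u v : List A) : ℕ :=
  sSup {n | ∃ w : List A, w.length = n ∧ w.Sublist u ∧ w.Sublist v}

/-- The (halved) Levenshtein distance `d_L(u,v) = (|u|+|v|)/2 - ℓ(u,v)`. -/
noncomputable def levD {A : Type*} (u v : List A) : ℝ :=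
  ((u.length : ℝ) + v.length) / 2 - lcs u v

/-- The Feldman pseudometric `𝔡_L`. -/
noncomputable def feld {A : Type*} (x y : ℕ → A) : ℝ :=
  limsup (fun l : ℕ => levD (factor x 0 l) (factor y 0 l) / l) atTop
/-- The window `x_[i, i+s)` of the infinite word `x`, as an element of `A^s`. -/
def window {A : Type*} (x : ℕ → A) (i : ℕ) (s : ℕ) : Fin s → A := fun k => x (i + k)

/-- The cocycle `S_n(x) = ∑_{j<n} |f(x_[j,j+s))|` of a local rule `f`. -/
def cocycle {A : Type*} {s : ℕ} (f : (Fin s → A) → List A) (x : ℕ → A) (n : ℕ) : ℕ :=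
  ∑ j ∈ Finset.range n, (f (window x j s)).length

/-- `F` is the dill map with local rule `f`: for every `x`, `F x` is the infinite
concatenation `f(x_[0,s)) f(x_[1,1+s)) f(x_[2,2+s)) ⋯`. -/
def IsDillVia {A : Type*} {s : ℕ} (f : (Fin s → A) → List A) (F : (ℕ → A) → ℕ → A) : Prop :=
  ∀ (x : ℕ → A) (n k : ℕ) (h : k < (f (window x n s)).length),
    F x (cocycle f x n + k) = (f (window x n s)).get ⟨k, h⟩
/-- The window `u_[i, i+s)` of the finite word `u`. -/
def listWindow {A : Type*} [Inhabited A] (u : List A) (i : ℕ) (s : ℕ) : Fin s → A :=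
  fun k => u.getD (i + k) default

/-- The extension `f^*` of a local rule `f` to finite words:
`f^*(u) = f(u_[0,s)) ⋯ f(u_[|u|-s,|u|))` when `|u| ≥ s`, and the empty word otherwise. -/
def fstar {A : Type*} [Inhabited A] {s : ℕ} (f : (Fin s → A) → List A) (u : List A) : List A :=
  ((List.range (u.length + 1 - s)).map (fun i => f (listWindow u i s))).flatten

section helpers

theorem dl_sub_common {A : Type*} (v : List A) : ∀ a b : List A, a.Sublist v → b.Sublist v →
    ∃ c : List A, c.Sublist a ∧ c.Sublist b ∧ a.length + b.length ≤ v.length + c.length := by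
  induction v with
  | nil =>
    intro a b ha hb
    have h1 := List.sublist_nil.mp ha
    have h2 := List.sublist_nil.mp hb
    subst h1; subst h2
    exact ⟨[], by simp⟩
  | cons z v ih =>
    intro a b ha hb
    rcases List.sublist_cons_iff.mp ha with ha' | ⟨a', rfl, ha'⟩
    · rcases List.sublist_cons_iff.mp hb with hb' | ⟨b', rfl, hb'⟩
      · obtain ⟨c, h1, h2, h3⟩ := ih a b ha' hb'
        exact ⟨c, h1, h2, by simp; omega⟩
      · obtain ⟨c, h1, h2, h3⟩ := ih a b' ha' hb'
        exact ⟨c, h1, h2.cons _, by simp; omega⟩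
    · rcases List.sublist_cons_iff.mp hb with hb' | ⟨b', rfl, hb'⟩
      · obtain ⟨c, h1, h2, h3⟩ := ih a' b ha' hb'
        exact ⟨c, h1.cons _, h2, by simp; omega⟩
      · obtain ⟨c, h1, h2, h3⟩ := ih a' b' ha' hb'
        exact ⟨z :: c, h1.cons_cons _, h2.cons_cons _, by simp; omega⟩

theorem dl_lcs_bdd {A : Type*} (u v : List A) :
    BddAbove {n | ∃ w : List A, w.length = n ∧ w.Sublist u ∧ w.Sublist v} := by
  refine ⟨u.length, ?_⟩
  rintro n ⟨w, rfl, h, -⟩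
  exact h.length_le

theorem dl_le_lcs {A : Type*} {u v w : List A} (h1 : w.Sublist u) (h2 : w.Sublist v) :
    w.length ≤ lcs u v := le_csSup (dl_lcs_bdd u v) ⟨w, rfl, h1, h2⟩

theorem dl_lcs_exists {A : Type*} (u v : List A) :
    ∃ w : List A, w.length = lcs u v ∧ w.Sublist u ∧ w.Sublist v :=
  Nat.sSup_mem (s := {n | ∃ w : List A, w.length = n ∧ w.Sublist u ∧ w.Sublist v})
    ⟨0, [], by simp⟩ (dl_lcs_bdd u v)

theorem dl_comm {A : Type*} (u v : List A) : levD u v = levD v u := by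
  obtain ⟨w, h1, h2, h3⟩ := dl_lcs_exists u v
  obtain ⟨w', h1', h2', h3'⟩ := dl_lcs_exists v u
  have a := dl_le_lcs h3 h2
  have b := dl_le_lcs h3' h2'
  have : lcs u v = lcs v u := by omega
  unfold levD
  rw [this]; ring

theorem dl_tri {A : Type*} (u v w : List A) : levD u w ≤ levD u v + levD v w := by
  obtain ⟨a, h1, h2, h3⟩ := dl_lcs_exists u v
  obtain ⟨b, h1', h2', h3'⟩ := dl_lcs_exists v w
  obtain ⟨c, k1, k2, k3⟩ := dl_sub_common v a b h3 h2'
  have := dl_le_lcs (k1.trans h2) (k2.trans h3')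
  have h : ((lcs u v : ℝ)) + lcs v w ≤ v.length + lcs u w := by
    exact_mod_cast (by omega : lcs u v + lcs v w ≤ v.length + lcs u w)
  unfold levD
  linarith

theorem dl_ge {A : Type*} (u v : List A) :
    |(u.length : ℝ) - v.length| / 2 ≤ levD u v := by
  obtain ⟨w, h1, h2, h3⟩ := dl_lcs_exists u v
  have a : (lcs u v : ℝ) ≤ u.length := by exact_mod_cast h1 ▸ h2.length_le
  have b : (lcs u v : ℝ) ≤ v.length := by exact_mod_cast h1 ▸ h3.length_le
  unfold levD
  rcases abs_cases ((u.length : ℝ) - v.length) with h | h <;> linarith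

theorem dl_nonneg {A : Type*} (u v : List A) : 0 ≤ levD u v :=
  le_trans (by positivity) (dl_ge u v)

theorem dl_sub {A : Type*} {u v : List A} (h : u.Sublist v) :
    levD u v ≤ ((v.length : ℝ) - u.length) / 2 := by
  have : (u.length : ℝ) ≤ lcs u v := by exact_mod_cast dl_le_lcs (List.Sublist.refl u) h
  unfold levD
  linarith

theorem dl_erase {A : Type*} {w u : List A} (h : w.Sublist u) :
    w = u ∨ ∃ j, j < u.length ∧ w.Sublist (u.eraseIdx j) := by
  induction h with
  | slnil => left; rfl
  | cons a h ih => right; exact ⟨0, by simp, by simpa using h⟩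
  | cons_cons a h ih =>
    rcases ih with rfl | ⟨j, hj, hh⟩
    · left; rfl
    · right; exact ⟨j + 1, by simpa using hj, by simpa using hh.cons_cons a⟩

theorem dl_chain {A : Type*} (g : List A → List A) (K c : ℝ)
    (h : ∀ (u : List A) (j : ℕ), j < u.length →
      levD (g (u.eraseIdx j)) (g u) ≤
        K + c * (((g u).length : ℝ) - ((g (u.eraseIdx j)).length : ℝ))) :
    ∀ (n : ℕ) (w u : List A), u.length = n → w.Sublist u →
      levD (g w) (g u) ≤ ((u.length : ℝ) - w.length) * K +
        c * (((g u).length : ℝ) - ((g w).length : ℝ)) := by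
  intro n
  induction n with
  | zero =>
    intro w u hu hw
    have h1 := List.length_eq_zero_iff.mp hu
    subst h1
    have h2 := List.sublist_nil.mp hw
    subst h2
    have := dl_sub (List.Sublist.refl (g []))
    simp at this ⊢
    exact this
  | succ n ih =>
    intro w u hu hw
    rcases dl_erase hw with rfl | ⟨j, hj, hh⟩
    · have := dl_sub (List.Sublist.refl (g w))
      simp at this ⊢
      exact this
    · have hl : (u.eraseIdx j).length = n := by rw [List.length_eraseIdx_of_lt hj]; omega
      have a := ih w _ hl hh
      have b := h u j hj
      have t := dl_tri (g w) (g (u.eraseIdx j)) (g u)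
      rw [hl] at a
      rw [hu]
      push_cast
      linarith

theorem dl_factor_len {A : Type*} (x : ℕ → A) (i n : ℕ) : (factor x i n).length = n := by
  simp [factor]

theorem dl_factor_add {A : Type*} (x : ℕ → A) (a b : ℕ) :
    factor x 0 (a + b) = factor x 0 a ++ factor x a b := by
  apply List.ext_getElem
  · simp [factor]
  · intro i h1 h2
    rw [List.getElem_append]
    simp only [factor, List.getElem_ofFn, List.length_ofFn]
    split
    · rfl
    · congr 1; omega

theorem dl_factor_sub {A : Type*} (x : ℕ → A) {a b : ℕ} (h : a ≤ b) :
    (factor x 0 a).Sublist (factor x 0 b) := by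
  obtain ⟨c, rfl⟩ := Nat.exists_eq_add_of_le h
  rw [dl_factor_add]
  exact List.sublist_append_left _ _

theorem dl_factor_dist {A : Type*} (x : ℕ → A) (a b : ℕ) :
    levD (factor x 0 a) (factor x 0 b) ≤ |(a : ℝ) - b| / 2 := by
  rcases le_total a b with h | h
  · have := dl_sub (dl_factor_sub x h)
    rw [dl_factor_len, dl_factor_len] at this
    have h2 := neg_abs_le ((a : ℝ) - b)
    linarith
  · have := dl_sub (dl_factor_sub x h)
    rw [dl_factor_len, dl_factor_len, dl_comm] at this
    have h2 := le_abs_self ((a : ℝ) - b)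
    linarith

theorem dl_factor_dill {A : Type*} {s : ℕ} (f : (Fin s → A) → List A)
    (F : (ℕ → A) → ℕ → A) (hF : IsDillVia f F) (x : ℕ → A) (n : ℕ) :
    ((List.range n).map (fun i => f (window x i s))).flatten = factor (F x) 0 (cocycle f x n) := by
  induction n with
  | zero => simp [cocycle, factor]
  | succ n ih =>
    have hc : cocycle f x (n + 1) = cocycle f x n + (f (window x n s)).length := by
      simp [cocycle, Finset.sum_range_succ]
    rw [List.range_succ, List.map_append, List.flatten_append, ih, hc, dl_factor_add]
    congr 1
    simp only [List.map_cons, List.map_nil, List.flatten_cons, List.flatten_nil, List.append_nil]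
    apply List.ext_getElem
    · simp [factor]
    · intro i h1 h2
      simp only [factor, List.getElem_ofFn]
      rw [hF x n i h1]
      rfl

theorem dl_fstar {A : Type*} [Inhabited A] {s : ℕ} (hs : 1 ≤ s) (f : (Fin s → A) → List A)
    (F : (ℕ → A) → ℕ → A) (hF : IsDillVia f F) (x : ℕ → A) (n : ℕ) :
    fstar f (factor x 0 (n + (s - 1))) = factor (F x) 0 (cocycle f x n) := by
  rw [← dl_factor_dill f F hF, fstar, dl_factor_len]
  have : n + (s - 1) + 1 - s = n := by omega
  rw [this]
  congr 1
  apply List.map_congr_left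
  intro i hi
  rw [List.mem_range] at hi
  congr 1
  funext k
  have hk := k.2
  have : i + k < (factor x 0 (n + (s - 1))).length := by rw [dl_factor_len]; omega
  simp only [listWindow, window]
  rw [List.getD_eq_getElem _ _ this]
  simp [factor]

/-- The finite estimate. -/
theorem dl_main {A : Type*} [Inhabited A] (s : ℕ) (hs : 1 ≤ s)
    (f : (Fin s → A) → List A) 
    (F : (ℕ → A) → ℕ → A) (hF : IsDillVia f F) (M M' : ℕ)
    (h1 : ∀ (u : List A) (j : ℕ), j < u.length →
      levD (fstar f (u.eraseIdx j)) (fstar f u) ≤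
        (M : ℝ) + (((fstar f u).length : ℝ) - ((fstar f (u.eraseIdx j)).length : ℝ)) / 2)
    (h2 : ∀ (u : List A) (j : ℕ), j < u.length →
      levD (fstar f (u.eraseIdx j)) (fstar f u) ≤
        (M' : ℝ) - (((fstar f u).length : ℝ) - ((fstar f (u.eraseIdx j)).length : ℝ)) / 2)
    (x y : ℕ → A) (n l : ℕ) (ha : cocycle f x n ≤ l) (hb : l ≤ cocycle f x n + M') :
    levD (factor (F x) 0 l) (factor (F y) 0 l) ≤
      ((M : ℝ) + M') * levD (factor x 0 (n + (s - 1))) (factor y 0 (n + (s - 1))) + M' := by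
  set u := factor x 0 (n + (s - 1)) with hu
  set v := factor y 0 (n + (s - 1)) with hv
  have hul : u.length = n + (s - 1) := dl_factor_len _ _ _
  have hvl : v.length = n + (s - 1) := dl_factor_len _ _ _
  obtain ⟨w, hw, hwu, hwv⟩ := dl_lcs_exists u v
  have hd : levD u v = ((n + (s - 1) : ℕ) : ℝ) - w.length := by
    unfold levD; rw [hul, hvl, hw]; ring
  have c1 := dl_chain (fstar f) M (1/2) (fun u j hj => by have := h1 u j hj; linarith)
  have c2 := dl_chain (fstar f) M' (-1/2) (fun u j hj => by have := h2 u j hj; linarith)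
  have u1 := c1 _ w u rfl hwu
  have u2 := c2 _ w u rfl hwu
  have v1 := c1 _ w v rfl hwv
  have v2 := c2 _ w v rfl hwv
  rw [hul, ← hd] at u1 u2
  rw [hvl, ← hd] at v1 v2
  have eu : fstar f u = factor (F x) 0 (cocycle f x n) := dl_fstar hs f F hF x n
  have ev : fstar f v = factor (F y) 0 (cocycle f y n) := dl_fstar hs f F hF y n
  have t := dl_tri (fstar f u) (fstar f w) (fstar f v)
  rw [dl_comm (fstar f u) (fstar f w)] at t
  rw [eu, ev] at t
  rw [eu, dl_factor_len] at u1 u2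
  rw [ev, dl_factor_len] at v1 v2
  have key : levD (factor (F x) 0 (cocycle f x n)) (factor (F y) 0 (cocycle f y n)) ≤
      ((M : ℝ) + M') * levD u v - |(cocycle f x n : ℝ) - cocycle f y n| / 2 := by
    rcases abs_cases ((cocycle f x n : ℝ) - cocycle f y n) with h | h <;> rw [h.1] <;> linarith
  have t1 := dl_tri (factor (F x) 0 l) (factor (F x) 0 (cocycle f x n)) (factor (F y) 0 l)
  have t2 := dl_tri (factor (F x) 0 (cocycle f x n)) (factor (F y) 0 (cocycle f y n))
    (factor (F y) 0 l)
  have d1 := dl_factor_dist (F x) l (cocycle f x n)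
  have d2 := dl_factor_dist (F y) (cocycle f y n) l
  have a1 : (cocycle f x n : ℝ) ≤ l := by exact_mod_cast ha
  have a2 : (l : ℝ) ≤ cocycle f x n + M' := by exact_mod_cast hb
  rw [abs_of_nonneg (by linarith)] at d1
  have a3 : |(cocycle f y n : ℝ) - l| ≤ |(cocycle f x n : ℝ) - cocycle f y n| + M' := by
    rw [abs_sub_comm (cocycle f x n : ℝ)]
    have := abs_sub_le (cocycle f y n : ℝ) (cocycle f x n) l
    have h : |(cocycle f x n : ℝ) - l| ≤ M' := abs_le.mpr ⟨by linarith, by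
      have : (0:ℝ) ≤ M' := Nat.cast_nonneg _
      linarith⟩
    linarith
  linarith

theorem dl_f_le {A : Type*} [Inhabited A] (s : ℕ) (hs : 1 ≤ s)
    (f : (Fin s → A) → List A) (M' : ℕ)
    (h2 : ∀ (u : List A) (j : ℕ), j < u.length →
      levD (fstar f (u.eraseIdx j)) (fstar f u) ≤
        (M' : ℝ) - (((fstar f u).length : ℝ) - ((fstar f (u.eraseIdx j)).length : ℝ)) / 2)
    (a : Fin s → A) : (f a).length ≤ M' := by
  have h := h2 (List.ofFn a) 0 (by simp; omega)
  have e1 : fstar f (List.ofFn a) = f a := by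
    have : listWindow (List.ofFn a) 0 s = a := by
      funext k
      simp [listWindow]
    simp [fstar, this]
  have e2 : fstar f ((List.ofFn a).eraseIdx 0) = [] := by
    have : s - 1 + 1 - s = 0 := by omega
    rw [fstar, List.length_eraseIdx_of_lt (by simp; omega), List.length_ofFn, this]
    rfl
  rw [e1, e2] at h
  have g := dl_ge [] (f a)
  simp at g h
  have : ((f a).length : ℝ) ≤ M' := by linarith
  exact_mod_cast this

theorem dl_quot_le {A : Type*} (x y : ℕ → A) (l : ℕ) :
    levD (factor x 0 l) (factor y 0 l) / l ≤ 1 := by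
  apply div_le_one_of_le₀ _ (Nat.cast_nonneg _)
  unfold levD
  rw [dl_factor_len, dl_factor_len]
  have : (0:ℝ) ≤ lcs (factor x 0 l) (factor y 0 l) := Nat.cast_nonneg _
  linarith

theorem dl_quot_nonneg {A : Type*} (x y : ℕ → A) (l : ℕ) :
    0 ≤ levD (factor x 0 l) (factor y 0 l) / l :=
  div_nonneg (dl_nonneg _ _) (Nat.cast_nonneg _)

end helpers

/-- Under the deletion bounds for `f^*` with constants `M, M'`, if `x` is such that
`|f(x_[i,i+s))| ≥ L` for every `i`, then `𝔡_L(F(x), F(y)) ≤ ((M+M')/L)·𝔡_L(x,y)`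
for every `y`. -/
theorem dill_feld_pointwise_lipschitz {A : Type*} [Inhabited A] (s : ℕ) (hs : 1 ≤ s)
    (f : (Fin s → A) → List A) (hf : ∀ u, f u ≠ [])
    (F : (ℕ → A) → ℕ → A) (hF : IsDillVia f F) (M M' : ℕ)
    (h1 : ∀ (u : List A) (j : ℕ), j < u.length →
      levD (fstar f (u.eraseIdx j)) (fstar f u) ≤
        (M : ℝ) + (((fstar f u).length : ℝ) - ((fstar f (u.eraseIdx j)).length : ℝ)) / 2)
    (h2 : ∀ (u : List A) (j : ℕ), j < u.length →
      levD (fstar f (u.eraseIdx j)) (fstar f u) ≤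
        (M' : ℝ) - (((fstar f u).length : ℝ) - ((fstar f (u.eraseIdx j)).length : ℝ)) / 2)
    (L : ℕ) (hL : 0 < L) (x : ℕ → A)
    (hx : ∀ i : ℕ, L ≤ (f (window x i s)).length) :
    ∀ y : ℕ → A, feld (F x) (F y) ≤ (((M : ℝ) + (M' : ℝ)) / L) * feld x y := by
  intro y
  have hM := dl_f_le s hs f M' h2
  have hLr : (0:ℝ) < L := by exact_mod_cast hL
  set C : ℝ := (M : ℝ) + M' with hC
  have hC0 : 0 ≤ C := by positivity
  have hlow : ∀ n, n * L ≤ cocycle f x n := by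
    intro n
    have := Finset.card_nsmul_le_sum (Finset.range n) (fun j => (f (window x j s)).length) L
      (fun j _ => hx j)
    simpa [cocycle] using this
  have hup : ∀ n, cocycle f x n ≤ n * M' := by
    intro n
    have := Finset.sum_le_card_nsmul (Finset.range n) (fun j => (f (window x j s)).length) M'
      (fun j _ => hM _)
    simpa [cocycle] using this
  have hsucc : ∀ n, cocycle f x (n + 1) = cocycle f x n + (f (window x n s)).length := by
    intro n
    simp [cocycle, Finset.sum_range_succ]
  have hn : ∀ l, ∃ n, cocycle f x n ≤ l ∧ l < cocycle f x (n + 1) := by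
    intro l
    induction l with
    | zero => exact ⟨0, by simp [cocycle], by have := hlow 1; simp at this ⊢; omega⟩
    | succ l ih =>
      obtain ⟨n, ha, hb⟩ := ih
      by_cases h : l + 1 < cocycle f x (n + 1)
      · exact ⟨n, by omega, h⟩
      · refine ⟨n + 1, by omega, ?_⟩
        have := hsucc (n + 1)
        have := hx (n + 1)
        omega
  apply le_of_forall_pos_le_add
  intro δ hδ
  set ε : ℝ := δ / (C / L + 1) with hε
  have hε0 : 0 < ε := by positivity
  have hεδ : C / L * ε + ε = δ := by
    rw [hε]; field_simp
  have hev : ∀ᶠ n : ℕ in atTop, levD (factor x 0 n) (factor y 0 n) / n < feld x y + ε := by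
    apply eventually_lt_of_limsup_lt
    · change feld x y < feld x y + ε
      linarith
    · exact isBoundedUnder_of ⟨1, dl_quot_le x y⟩
  obtain ⟨N0, hN0⟩ := eventually_atTop.mp hev
  set E : ℝ := feld x y + ε with hE
  have hE0 : 0 ≤ E := (dl_quot_nonneg x y N0).trans (hN0 N0 le_rfl).le
  set K : ℝ := C * E * (s - 1 : ℕ) + M' with hK
  have hK0 : 0 ≤ K := by positivity
  obtain ⟨N1, hN1⟩ := exists_nat_ge (K / ε)
  have hgoal : feld (F x) (F y) ≤ C / L * E + ε := by
    unfold feld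
    apply limsup_le_of_le
    · exact (isBoundedUnder_of ⟨0, dl_quot_nonneg (F x) (F y)⟩ :
        IsBoundedUnder (· ≥ ·) atTop _).isCoboundedUnder_le
    filter_upwards [eventually_ge_atTop (N1 + 1), eventually_ge_atTop ((N0 + 2) * M')] with l k1 k2
    obtain ⟨n, ha, hb⟩ := hn l
    have hl0 : (0:ℝ) < l := by exact_mod_cast (by omega : 0 < l)
    have hnN : N0 + 1 ≤ n := by
      by_contra hc
      have h3 := hup (n + 1)
      have h4 : (n + 1) * M' ≤ (N0 + 2) * M' := Nat.mul_le_mul_right _ (by omega)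
      omega
    have hm := dl_main s hs f F hF M M' h1 h2 x y n l ha (by
      have := hsucc n
      have := hM (window x n s)
      omega)
    have hd := hN0 (n + (s - 1)) (by omega)
    have hpos : (0:ℝ) < ((n + (s - 1) : ℕ) : ℝ) := by
      exact_mod_cast (by omega : 0 < n + (s - 1))
    rw [div_lt_iff₀ hpos] at hd
    have hd2 := mul_le_mul_of_nonneg_left hd.le hC0
    push_cast [-Nat.cast_sub] at hd2
    have hnl : (n : ℝ) ≤ l / L := by
      rw [le_div_iff₀ hLr]
      exact_mod_cast (hlow n).trans ha
    have h5 := mul_le_mul_of_nonneg_left hnl (mul_nonneg hC0 hE0)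
    have h6 : K ≤ ε * l := by
      rw [div_le_iff₀ hε0] at hN1
      have : (N1 : ℝ) ≤ l := by exact_mod_cast (by omega : N1 ≤ l)
      nlinarith
    rw [div_le_iff₀ hl0]
    have h7 : C * E * (l / L) = C / L * E * l := by ring
    rw [← hC] at hm
    nlinarith
  have : C / L * E = C / L * feld x y + C / L * ε := by rw [hE]; ring
  linarith
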